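/- Let K be a commutative field of characteristic different from two, and let G = T(2, K) be the group of invertible upper triangular 2×2 matrices over K (matrices [[α, t], [0, β]] with α, β ∈ K nonzero and t ∈ K, under matrix multiplication). Then the Jensen functional equation is stable on G: every pseudo-Jensen function f : G → ℝ satisfies the Jensen equation f(xy) + f(xy⁻¹) = 2f(x) for all x, y ∈ G (and f(1) = 0). -/

import Mathlib

/-!
Let `N` be the unipotent subgroup of `T2 K`, that is, the kernel of the homomorphism `T2.diag` to
the diagonal entries; it is abelian and normal, with abelian quotient. The involution
`diag(-1, 1)` conjugates every `u ∈ N` to `u⁻¹`, which forces a pseudo-Jensen `f` to vanish on `N`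
(`PseudoJensen.eq_zero_of_inverted`).

The central step is that `f` is constant on the cosets of `N`. On a coset `g * N` the function
`ψ_g v = f (g * v) - f g` is additive and anti-invariant under conjugation by `g`, up to bounded
errors. Comparing `ψ_g` with `ψ_{g²}` through `f ((g * v) ^ 2) = 2 * f (g * v)` shows that `ψ_g` is
bounded, uniformly in `g` (`PseudoJensen.abs_coset_sub_le`). Passing to powers removes the bound,
so `f` depends only on the class modulo `N`.

The quotient being abelian, `f ((x * y) ^ n) = f (x ^ n * y ^ n)`, and the quasi-Jensen inequality
at `(x ^ n, y ^ n)`, divided by `n`, gives the exact equation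
(`PseudoJensen.jensen_of_inverted_ker`).
-/

open Matrix

/-- The group `T(2, K)` of invertible upper triangular 2×2 matrices over `K`,
as a subgroup of `GL(2, K)`. -/
def T2 (K : Type*) [Field K] : Subgroup (Matrix.GeneralLinearGroup (Fin 2) K) where
  carrier := {M | (M : Matrix (Fin 2) (Fin 2) K) 1 0 = 0}
  one_mem' := by
    show ((1 : Matrix.GeneralLinearGroup (Fin 2) K) : Matrix (Fin 2) (Fin 2) K) 1 0 = 0
    simp [Matrix.one_apply]
  mul_mem' := by
    intro a b ha hb
    show ((a * b : Matrix.GeneralLinearGroup (Fin 2) K) : Matrix (Fin 2) (Fin 2) K) 1 0 = 0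
    rw [Units.val_mul]
    simp only [Matrix.mul_apply, Fin.sum_univ_two]
    rw [Set.mem_setOf_eq] at ha hb
    rw [ha, hb]
    ring
  inv_mem' := by
    intro a ha
    rw [Set.mem_setOf_eq] at ha
    show ((a⁻¹ : Matrix.GeneralLinearGroup (Fin 2) K) : Matrix (Fin 2) (Fin 2) K) 1 0 = 0
    set N := ((a⁻¹ : Matrix.GeneralLinearGroup (Fin 2) K) : Matrix (Fin 2) (Fin 2) K) with hN
    have hmul : (a : Matrix (Fin 2) (Fin 2) K) * N = 1 := by
      rw [hN, ← Units.val_mul, mul_inv_cancel, Units.val_one]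
    have key : (a : Matrix (Fin 2) (Fin 2) K) 1 0 * N 0 0 +
        (a : Matrix (Fin 2) (Fin 2) K) 1 1 * N 1 0 = 0 := by
      have := congrFun (congrFun hmul 1) 0
      rwa [Matrix.mul_apply, Fin.sum_univ_two, Matrix.one_apply_ne (by decide)] at this
    rw [ha, zero_mul, zero_add] at key
    have hdet : ((a : Matrix (Fin 2) (Fin 2) K)).det ≠ 0 :=
      (Matrix.isUnits_det_units a).ne_zero
    rw [Matrix.det_fin_two, ha, mul_zero, sub_zero] at hdet
    have h11 : (a : Matrix (Fin 2) (Fin 2) K) 1 1 ≠ 0 := right_ne_zero_of_mul hdet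
    exact (mul_eq_zero.mp key).resolve_left h11

/-- A function `f : G → ℝ` is quasi-Jensen if there is `c > 0` with
`|f(xy) + f(xy⁻¹) − 2f(x)| ≤ c` for all `x, y`. -/
def QuasiJensen {G : Type*} [Group G] (f : G → ℝ) : Prop :=
  ∃ c > (0 : ℝ), ∀ x y : G, |f (x * y) + f (x * y⁻¹) - 2 * f x| ≤ c

/-- A function `f : G → ℝ` is pseudo-Jensen if it is quasi-Jensen and
`f(xⁿ) = n·f(x)` for all `x` and all integers `n`. -/
def PseudoJensen {G : Type*} [Group G] (f : G → ℝ) : Prop :=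
  QuasiJensen f ∧ ∀ (x : G) (n : ℤ), f (x ^ n) = (n : ℝ) * f x

/-- An Archimedean squeeze: a real number all of whose multiples are bounded is zero. -/
lemma eq_zero_of_nat_mul_bounded {a C : ℝ} (h : ∀ n : ℕ, |(n : ℝ) * a| ≤ C) : a = 0 := by
  by_contra ha
  obtain ⟨n, hn⟩ := exists_nat_gt (C / |a|)
  have hpos : 0 < |a| := abs_pos.mpr ha
  have h1 := h n
  rw [abs_mul, Nat.abs_cast] at h1
  rw [div_lt_iff₀ hpos] at hn
  linarith

section PseudoJensenGeneral

variable {G : Type*} [Group G] {f : G → ℝ}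

lemma PseudoJensen.map_one (hf : PseudoJensen f) : f 1 = 0 := by
  simpa using hf.2 1 0

lemma PseudoJensen.map_inv (hf : PseudoJensen f) (x : G) : f x⁻¹ = -f x := by
  simpa using hf.2 x (-1)

lemma PseudoJensen.map_pow (hf : PseudoJensen f) (x : G) (n : ℕ) : f (x ^ n) = n * f x := by
  simpa using hf.2 x n

lemma PseudoJensen.map_mul_self (hf : PseudoJensen f) (x : G) : f (x * x) = 2 * f x := by
  simpa [sq] using hf.map_pow x 2

/-- Adding the quasi-Jensen inequalities for `(x, y)` and `(y, x)`, the terms `f (x * y⁻¹)` and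
`f (y * x⁻¹)` cancel because `f` is odd. -/
lemma PseudoJensen.abs_add_swap_le (hf : PseudoJensen f) {c : ℝ}
    (hc : ∀ x y : G, |f (x * y) + f (x * y⁻¹) - 2 * f x| ≤ c) (x y : G) :
    |f (x * y) + f (y * x) - 2 * f x - 2 * f y| ≤ 2 * c := by
  have h1 := abs_le.mp (hc x y)
  have h2 := abs_le.mp (hc y x)
  have h3 : f (y * x⁻¹) = -f (x * y⁻¹) := by
    rw [← hf.map_inv]; congr 1; group
  rw [abs_le]
  constructor <;> linarith [h1.1, h1.2, h2.1, h2.2]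

/-- On a coset `g * N` of an abelian subgroup, `v ↦ f (g * v) - f g` is additive up to a bounded
error which does not depend on `g`. -/
lemma abs_coset_additive_le {c : ℝ}
    (hc : ∀ x y : G, |f (x * y) + f (x * y⁻¹) - 2 * f x| ≤ c) (g : G) {v w : G}
    (hvw : v * w = w * v) :
    |f (g * (v * w)) - f (g * v) - f (g * w) + f g| ≤ 3 / 2 * c := by
  have h1 := abs_le.mp (hc (g * v) w)
  have h2 := abs_le.mp (hc (g * w) v)
  have h3 := abs_le.mp (hc g (v * w⁻¹))
  have e1 : g * w * v = g * (v * w) := by rw [hvw, mul_assoc]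
  have e2 : g * (v * w⁻¹)⁻¹ = g * w * v⁻¹ := by group
  rw [mul_assoc g v w, mul_assoc g v w⁻¹] at h1
  rw [e1] at h2
  rw [e2] at h3
  rw [abs_le]
  constructor <;> linarith [h1.1, h1.2, h2.1, h2.2, h3.1, h3.2]

/-- An involution `s` inverting `N` by conjugation forces `f` to vanish on `N`: both `s * u` and
`u * s` are involutions, so `f` kills them, and `f u` is within `c` of their average. -/
lemma PseudoJensen.eq_zero_of_inverted (hf : PseudoJensen f) {N : Subgroup G} {s : G}
    (hs : s * s = 1) (hsN : ∀ u ∈ N, s * u * (s * u) = 1) {u : G} (hu : u ∈ N) : f u = 0 := by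
  have hinv : ∀ x : G, x * x = 1 → f x = 0 := by
    intro x hx
    have := hf.map_mul_self x
    rw [hx, hf.map_one] at this
    linarith
  obtain ⟨c, -, hc⟩ := hf.1
  refine eq_zero_of_nat_mul_bounded (C := c) fun n => ?_
  rw [← hf.map_pow]
  have hun : u ^ n ∈ N := N.pow_mem hu n
  generalize u ^ n = v at hun
  have hvs : v * s * (v * s) = 1 := by
    have h := hsN v hun
    calc v * s * (v * s) = s⁻¹ * (s * v * (s * v)) * s := by group
      _ = 1 := by rw [h]; group
  have h := abs_le.mp (hf.abs_add_swap_le hc s v)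
  rw [hinv _ (hsN v hun), hinv _ hvs, hinv s hs] at h
  rw [abs_le]
  constructor <;> linarith [h.1, h.2]

/-- A pseudo-Jensen function vanishing on an abelian normal subgroup `N` is within bounded distance
of being constant on each coset of `N`, uniformly in the coset.

With `ψ_g v = f (g * v) - f g` and `L v = g⁻¹ * v * g`, one has `ψ_g (L v) ≈ -ψ_g v`,
`ψ_{g²} (L (L v)) ≈ -ψ_{g²} v` and `2 ψ_g v = ψ_{g²} (L v * v)`. Adding the last identity at `v` and
at `L v` gives `0 ≈ 2 ψ_{g²} (L v)`; hence `ψ_{g²}`, and then `ψ_g`, is bounded. -/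
lemma PseudoJensen.abs_coset_sub_le (hf : PseudoJensen f) {c : ℝ}
    (hc : ∀ x y : G, |f (x * y) + f (x * y⁻¹) - 2 * f x| ≤ c) {N : Subgroup G} [hN : N.Normal]
    (hcomm : ∀ u ∈ N, ∀ v ∈ N, u * v = v * u) (hzero : ∀ u ∈ N, f u = 0)
    (g : G) {v : G} (hv : v ∈ N) : |f (g * v) - f g| ≤ 9 / 4 * c := by
  have hconj : ∀ k : G, ∀ w ∈ N, k⁻¹ * w * k ∈ N := fun k w hw => by
    simpa using hN.conj_mem w hw k⁻¹
  have hanti : ∀ k : G, ∀ w ∈ N, |f (k * w) + f (k * (k⁻¹ * w * k)) - 2 * f k| ≤ 2 * c := by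
    intro k w hw
    have h := hf.abs_add_swap_le hc k w
    rw [hzero w hw] at h
    have e : k * (k⁻¹ * w * k) = w * k := by group
    rw [e]
    simpa using h
  have hdouble : ∀ w : G, 2 * f (g * w) = f (g * g * (g⁻¹ * w * g * w)) := by
    intro w
    rw [← hf.map_mul_self]; congr 1; group
  have hg2 : f (g * g) = 2 * f g := hf.map_mul_self g
  have hL : ∀ w ∈ N, |f (g * g * (g⁻¹ * w * g)) - f (g * g)| ≤ 9 / 2 * c := by
    intro w hw
    have hw1 := hconj g w hw
    have hw2 := hconj g _ hw1
    have a1 := abs_le.mp (hanti g w hw)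
    have a2 := abs_le.mp (hanti (g * g) w hw)
    have e : (g * g)⁻¹ * w * (g * g) = g⁻¹ * (g⁻¹ * w * g) * g := by group
    rw [e] at a2
    have d1 := hdouble w
    have d2 := hdouble (g⁻¹ * w * g)
    have b1 := abs_le.mp (abs_coset_additive_le hc (g * g) (hcomm _ hw1 _ hw))
    have b2 := abs_le.mp (abs_coset_additive_le hc (g * g) (hcomm _ hw2 _ hw1))
    rw [abs_le]
    constructor <;> linarith [a1.1, a1.2, a2.1, a2.2, b1.1, b1.2, b2.1, b2.2]
  have hw1 : g⁻¹ * v * g * v ∈ N := N.mul_mem (hconj g v hv) hv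
  -- Conjugation by `g` maps `N` onto `N`, so the bound on the image of `L` holds on all of `N`.
  have h := hL (g * (g⁻¹ * v * g * v) * g⁻¹) (hN.conj_mem _ hw1 g)
  have e : g⁻¹ * (g * (g⁻¹ * v * g * v) * g⁻¹) * g = g⁻¹ * v * g * v := by group
  rw [e, ← hdouble, hg2, abs_le] at h
  rw [abs_le]
  constructor <;> linarith [h.1, h.2]

/-- Jensen stability for a group `G` with a homomorphism `φ` to a commutative monoid whose kernel is
abelian and is inverted by an involution `s`. The function `f` factors through `φ`, so `f` does not
distinguish `(x * y) ^ n` from `x ^ n * y ^ n`; dividing the quasi-Jensen inequality for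
`(x ^ n, y ^ n)` by `n` then removes the error. -/
theorem PseudoJensen.jensen_of_inverted_ker (hf : PseudoJensen f) {M : Type*} [CommMonoid M]
    (φ : G →* M) (hcomm : ∀ u ∈ φ.ker, ∀ v ∈ φ.ker, u * v = v * u) {s : G} (hs : s * s = 1)
    (hsN : ∀ u ∈ φ.ker, s * u * (s * u) = 1) (x y : G) :
    f (x * y) + f (x * y⁻¹) = 2 * f x := by
  obtain ⟨c, -, hc⟩ := hf.1
  have hker : ∀ a b : G, φ a = φ b → a⁻¹ * b ∈ φ.ker := by
    intro a b hab
    rw [MonoidHom.mem_ker, _root_.map_mul, ← hab, ← _root_.map_mul, inv_mul_cancel, _root_.map_one]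
  have hbdd : ∀ a b : G, φ a = φ b → |f b - f a| ≤ 9 / 4 * c := by
    intro a b hab
    have h := hf.abs_coset_sub_le hc hcomm (fun u hu => hf.eq_zero_of_inverted hs hsN hu) a
      (hker a b hab)
    rwa [mul_inv_cancel_left] at h
  have hfac : ∀ a b : G, φ a = φ b → f b = f a := by
    intro a b hab
    refine sub_eq_zero.mp (eq_zero_of_nat_mul_bounded (C := 9 / 4 * c) fun n => ?_)
    rw [mul_sub, ← hf.map_pow, ← hf.map_pow]
    exact hbdd _ _ (by rw [_root_.map_pow, _root_.map_pow, hab])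
  have hpow : ∀ (a b : G) (n : ℕ), f (a ^ n * b ^ n) = n * f (a * b) := by
    intro a b n
    rw [← hf.map_pow]
    exact hfac _ _ (by simp only [_root_.map_mul, _root_.map_pow, mul_pow])
  refine sub_eq_zero.mp (eq_zero_of_nat_mul_bounded (C := c) fun n => ?_)
  have h := hc (x ^ n) (y ^ n)
  rw [← inv_pow, hpow, hpow, hf.map_pow] at h
  convert h using 2
  ring

end PseudoJensenGeneral

lemma T2.apply_one_zero {K : Type*} [Field K] (x : T2 K) :
    (x : Matrix.GeneralLinearGroup (Fin 2) K).val 1 0 = 0 := x.2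

lemma T2.ext_entries {K : Type*} [Field K] {x y : T2 K}
    (h00 : (x : Matrix.GeneralLinearGroup (Fin 2) K).val 0 0 = y.1.val 0 0)
    (h01 : (x : Matrix.GeneralLinearGroup (Fin 2) K).val 0 1 = y.1.val 0 1)
    (h11 : (x : Matrix.GeneralLinearGroup (Fin 2) K).val 1 1 = y.1.val 1 1) : x = y := by
  apply Subtype.ext
  apply Units.ext
  ext i j
  fin_cases i <;> fin_cases j
  · exact h00
  · exact h01
  · exact (T2.apply_one_zero x).trans (T2.apply_one_zero y).symm
  · exact h11

/-- The homomorphism sending an upper triangular matrix to its pair of diagonal entries. Its kernel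
is the group of unipotent upper triangular matrices. -/
def T2.diag (K : Type*) [Field K] : T2 K →* K × K where
  toFun x := (x.1.val 0 0, x.1.val 1 1)
  map_one' := by simp
  map_mul' x y := by
    have hx := T2.apply_one_zero x
    have hy := T2.apply_one_zero y
    simp [Matrix.mul_apply, Fin.sum_univ_two, hx, hy]

/-- The involution `diag(-1, 1)`. -/
def T2.refl (K : Type*) [Field K] : T2 K :=
  ⟨⟨!![-1, 0; 0, 1], !![-1, 0; 0, 1], by simp [Matrix.one_fin_two], by simp [Matrix.one_fin_two]⟩,
    by show (!![-1, 0; 0, 1] : Matrix (Fin 2) (Fin 2) K) 1 0 = 0; simp⟩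

/-- Theorem 3.15 / `stJ-2`.  Let `K` be a commutative field of
characteristic different from two and `G = T(2, K)` the group of invertible
upper triangular 2×2 matrices over `K`.  Then the Jensen equation is stable on
`G`: every pseudo-Jensen function `f : G → ℝ` satisfies the Jensen equation,
and `f(1) = 0`. -/
theorem stmt19 (K : Type*) [Field K] (hchar : (2 : K) ≠ 0)
    (f : T2 K → ℝ) (hf : PseudoJensen f) :
    (∀ x y : T2 K, f (x * y) + f (x * y⁻¹) = 2 * f x) ∧ f 1 = 0 := by
  refine ⟨hf.jensen_of_inverted_ker (T2.diag K) ?_ (s := T2.refl K) ?_ ?_, hf.map_one⟩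
  · intro u hu v hv
    have hu' : u.1.val 0 0 = 1 ∧ u.1.val 1 1 = 1 := Prod.mk.inj hu
    have hv' : v.1.val 0 0 = 1 ∧ v.1.val 1 1 = 1 := Prod.mk.inj hv
    apply T2.ext_entries <;>
      simp [Matrix.mul_apply, Fin.sum_univ_two, T2.apply_one_zero u, T2.apply_one_zero v, hu', hv',
        add_comm]
  · apply T2.ext_entries <;> simp [T2.refl, Matrix.mul_apply, Fin.sum_univ_two]
  · intro u hu
    have hu' : u.1.val 0 0 = 1 ∧ u.1.val 1 1 = 1 := Prod.mk.inj hu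
    apply T2.ext_entries <;>
      simp [T2.refl, Matrix.mul_apply, Matrix.vecMul, dotProduct, Fin.sum_univ_two,
        T2.apply_one_zero u, hu']
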